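/- Let ρ_BTN be a basic triangle network state and let ρ_UTN = (U_A ⊗ U_B ⊗ U_C) ρ_BTN (U_A ⊗ U_B ⊗ U_C)†, where U_A, U_B, U_C are unitaries on the respective parties' d²-dimensional systems A = A₁A₂, B = B₁B₂, C = C₁C₂. Let each party's observables {A_i}, {B_j}, {C_k} form a complete orthogonal set of observables on C^{d²}. Then there exist real orthogonal d⁴×d⁴ matrices O_A, O_B, O_C such that, with O = O_A ⊕ O_B ⊕ O_C, one has Γ({A_i, B_j, C_k}, ρ_UTN) = Oᵀ Γ({A_i, B_j, C_k}, ρ_BTN) O; in particular Γ({A_i, B_j, C_k}, ρ_UTN) = Oᵀ(T_c + T_b + T_a + R)O, where T_c, T_b, T_a, R are the positive semidefinite matrices of the block decomposition of the covariance matrix of the BTN state ρ_BTN (T_c the covariance matrix of the reduced observables on ρ_c padded with zeros in the Charlie sector, T_b and T_a analogously, and R block-diagonal positive semidefinite). -/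

import Mathlib

open Matrix Kronecker BigOperators
open scoped ComplexOrder

noncomputable section

/-- Covariance matrix of a family of observables `M` in the state `ρ`. -/
def covMat {n ι : Type*} [Fintype n] (M : ι → Matrix n n ℂ) (ρ : Matrix n n ℂ) :
    Matrix ι ι ℂ :=
  Matrix.of fun i j => (M i * M j * ρ).trace - (M i * ρ).trace * (M j * ρ).trace

/-- A density matrix: positive semidefinite with unit trace. -/
def IsDensity {n : Type*} [Fintype n] (ρ : Matrix n n ℂ) : Prop :=
  ρ.PosSemidef ∧ ρ.trace = 1

/-- Partial trace over the first tensor factor. -/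
def ptrace₁ {m n : Type*} [Fintype m] (M : Matrix (m × n) (m × n) ℂ) : Matrix n n ℂ :=
  Matrix.of fun i j => ∑ k, M (k, i) (k, j)

/-- Partial trace over the second tensor factor. -/
def ptrace₂ {m n : Type*} [Fintype n] (M : Matrix (m × n) (m × n) ℂ) : Matrix m m ℂ :=
  Matrix.of fun i j => ∑ k, M (i, k) (j, k)

/-- Index of a two-qudit space. -/
abbrev D2 (d : ℕ) := Fin d × Fin d

/-- Index of the six-factor triangle-network space, ordered C₂, A₁, A₂, B₁, B₂, C₁. -/
abbrev TriIdx (d : ℕ) := D2 d × (D2 d × D2 d)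

/-- The basic triangle network state `ρ_b ⊗ ρ_c ⊗ ρ_a`. -/
def btnState {d : ℕ} (ρa ρb ρc : Matrix (D2 d) (D2 d) ℂ) :
    Matrix (TriIdx d) (TriIdx d) ℂ :=
  ρb ⊗ₖ (ρc ⊗ₖ ρa)

/-- Embed an observable of Alice (acting on A₁A₂) into the global space. -/
def embedA {d : ℕ} (M : Matrix (D2 d) (D2 d) ℂ) : Matrix (TriIdx d) (TriIdx d) ℂ :=
  Matrix.of fun p q =>
    if p.1.1 = q.1.1 ∧ p.2.1.2 = q.2.1.2 ∧ p.2.2 = q.2.2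
    then M (p.1.2, p.2.1.1) (q.1.2, q.2.1.1) else 0

/-- Embed an observable of Bob (acting on B₁B₂) into the global space. -/
def embedB {d : ℕ} (M : Matrix (D2 d) (D2 d) ℂ) : Matrix (TriIdx d) (TriIdx d) ℂ :=
  Matrix.of fun p q =>
    if p.1 = q.1 ∧ p.2.1.1 = q.2.1.1 ∧ p.2.2.2 = q.2.2.2
    then M (p.2.1.2, p.2.2.1) (q.2.1.2, q.2.2.1) else 0

/-- Embed an observable of Charlie (acting on C₁C₂) into the global space. -/
def embedC {d : ℕ} (M : Matrix (D2 d) (D2 d) ℂ) : Matrix (TriIdx d) (TriIdx d) ℂ :=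
  Matrix.of fun p q =>
    if p.1.2 = q.1.2 ∧ p.2.1 = q.2.1 ∧ p.2.2.1 = q.2.2.1
    then M (p.2.2.2, p.1.1) (q.2.2.2, q.1.1) else 0

section marginals
variable {d : ℕ} (ρa ρb ρc : Matrix (D2 d) (D2 d) ℂ)

/-- Marginal of ρ_BTN on A₁ (second factor of ρ_b = ρ^{C₂A₁}). -/
def margA1 : Matrix (Fin d) (Fin d) ℂ := ptrace₁ ρb
/-- Marginal on C₂. -/
def margC2 : Matrix (Fin d) (Fin d) ℂ := ptrace₂ ρb
/-- Marginal on A₂ (first factor of ρ_c = ρ^{A₂B₁}). -/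
def margA2 : Matrix (Fin d) (Fin d) ℂ := ptrace₂ ρc
/-- Marginal on B₁. -/
def margB1 : Matrix (Fin d) (Fin d) ℂ := ptrace₁ ρc
/-- Marginal on B₂ (first factor of ρ_a = ρ^{B₂C₁}). -/
def margB2 : Matrix (Fin d) (Fin d) ℂ := ptrace₂ ρa
/-- Marginal on C₁. -/
def margC1 : Matrix (Fin d) (Fin d) ℂ := ptrace₁ ρa

/-- Reduced observable A^(2) = tr_{A₁}(A (ρ^{A₁} ⊗ 1)). -/
def redA2 (M : Matrix (D2 d) (D2 d) ℂ) : Matrix (Fin d) (Fin d) ℂ :=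
  ptrace₁ (M * (margA1 ρb ⊗ₖ (1 : Matrix (Fin d) (Fin d) ℂ)))
/-- Reduced observable A^(1) = tr_{A₂}(A (1 ⊗ ρ^{A₂})). -/
def redA1 (M : Matrix (D2 d) (D2 d) ℂ) : Matrix (Fin d) (Fin d) ℂ :=
  ptrace₂ (M * ((1 : Matrix (Fin d) (Fin d) ℂ) ⊗ₖ margA2 ρc))
/-- Reduced observable B^(1) = tr_{B₂}(B (1 ⊗ ρ^{B₂})). -/
def redB1 (M : Matrix (D2 d) (D2 d) ℂ) : Matrix (Fin d) (Fin d) ℂ :=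
  ptrace₂ (M * ((1 : Matrix (Fin d) (Fin d) ℂ) ⊗ₖ margB2 ρa))
/-- Reduced observable B^(2) = tr_{B₁}(B (ρ^{B₁} ⊗ 1)). -/
def redB2 (M : Matrix (D2 d) (D2 d) ℂ) : Matrix (Fin d) (Fin d) ℂ :=
  ptrace₁ (M * (margB1 ρc ⊗ₖ (1 : Matrix (Fin d) (Fin d) ℂ)))
/-- Reduced observable C^(1) = tr_{C₂}(C (1 ⊗ ρ^{C₂})); here C acts on C₁C₂. -/
def redC1 (M : Matrix (D2 d) (D2 d) ℂ) : Matrix (Fin d) (Fin d) ℂ :=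
  ptrace₂ (M * ((1 : Matrix (Fin d) (Fin d) ℂ) ⊗ₖ margC2 ρb))
/-- Reduced observable C^(2) = tr_{C₁}(C (ρ^{C₁} ⊗ 1)). -/
def redC2 (M : Matrix (D2 d) (D2 d) ℂ) : Matrix (Fin d) (Fin d) ℂ :=
  ptrace₁ (M * (margC1 ρa ⊗ₖ (1 : Matrix (Fin d) (Fin d) ℂ)))

end marginals


theorem kron_induction {m n : Type*} [Fintype m] [Fintype n] [DecidableEq m] [DecidableEq n]
    {P : Matrix (m × n) (m × n) ℂ → Prop}
    (h0 : P 0) (hadd : ∀ X Y, P X → P Y → P (X + Y))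
    (hk : ∀ (X : Matrix m m ℂ) (Y : Matrix n n ℂ), P (X ⊗ₖ Y)) (M) : P M := by
  induction M using Matrix.induction_on' with
  | h_zero => exact h0
  | h_add p q hp hq => exact hadd p q hp hq
  | h_std_basis i j x =>
    have h : Matrix.single i j x = (Matrix.single i.1 j.1 x) ⊗ₖ (Matrix.single i.2 j.2 (1 : ℂ)) := by
      rw [Matrix.single_kronecker_single]; simp
    rw [h]; exact hk _ _

section embeds
variable {d : ℕ}

theorem embedA_add (M N : Matrix (D2 d) (D2 d) ℂ) : embedA (M + N) = embedA M + embedA N := by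
  ext p q; simp only [embedA, Matrix.of_apply, Matrix.add_apply]; split_ifs <;> simp
theorem embedB_add (M N : Matrix (D2 d) (D2 d) ℂ) : embedB (M + N) = embedB M + embedB N := by
  ext p q; simp only [embedB, Matrix.of_apply, Matrix.add_apply]; split_ifs <;> simp
theorem embedC_add (M N : Matrix (D2 d) (D2 d) ℂ) : embedC (M + N) = embedC M + embedC N := by
  ext p q; simp only [embedC, Matrix.of_apply, Matrix.add_apply]; split_ifs <;> simp
theorem embedA_zero : embedA (0 : Matrix (D2 d) (D2 d) ℂ) = 0 := by
  ext p q; simp [embedA]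
theorem embedB_zero : embedB (0 : Matrix (D2 d) (D2 d) ℂ) = 0 := by
  ext p q; simp [embedB]
theorem embedC_zero : embedC (0 : Matrix (D2 d) (D2 d) ℂ) = 0 := by
  ext p q; simp [embedC]
theorem embedA_smul (c : ℂ) (M : Matrix (D2 d) (D2 d) ℂ) : embedA (c • M) = c • embedA M := by
  ext p q; simp [embedA]
theorem embedB_smul (c : ℂ) (M : Matrix (D2 d) (D2 d) ℂ) : embedB (c • M) = c • embedB M := by
  ext p q; simp [embedB]
theorem embedC_smul (c : ℂ) (M : Matrix (D2 d) (D2 d) ℂ) : embedC (c • M) = c • embedC M := by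
  ext p q; simp [embedC]

theorem embedA_kron (X Y : Matrix (Fin d) (Fin d) ℂ) :
    embedA (X ⊗ₖ Y) = ((1 : Matrix (Fin d) (Fin d) ℂ) ⊗ₖ X) ⊗ₖ
      ((Y ⊗ₖ (1 : Matrix (Fin d) (Fin d) ℂ)) ⊗ₖ (1 : Matrix (D2 d) (D2 d) ℂ)) := by
  ext ⟨⟨a, b⟩, ⟨c, e⟩, f⟩ ⟨⟨a', b'⟩, ⟨c', e'⟩, f'⟩
  simp only [embedA, Matrix.of_apply, Matrix.kroneckerMap_apply, Matrix.one_apply]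
  split_ifs <;> simp_all
theorem embedB_kron (X Y : Matrix (Fin d) (Fin d) ℂ) :
    embedB (X ⊗ₖ Y) = (1 : Matrix (D2 d) (D2 d) ℂ) ⊗ₖ
      (((1 : Matrix (Fin d) (Fin d) ℂ) ⊗ₖ X) ⊗ₖ (Y ⊗ₖ (1 : Matrix (Fin d) (Fin d) ℂ))) := by
  ext ⟨a, ⟨c, e⟩, ⟨f, g⟩⟩ ⟨a', ⟨c', e'⟩, ⟨f', g'⟩⟩
  simp only [embedB, Matrix.of_apply, Matrix.kroneckerMap_apply, Matrix.one_apply]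
  split_ifs <;> simp_all
theorem embedC_kron (X Y : Matrix (Fin d) (Fin d) ℂ) :
    embedC (X ⊗ₖ Y) = (Y ⊗ₖ (1 : Matrix (Fin d) (Fin d) ℂ)) ⊗ₖ
      ((1 : Matrix (D2 d) (D2 d) ℂ) ⊗ₖ ((1 : Matrix (Fin d) (Fin d) ℂ) ⊗ₖ X)) := by
  ext ⟨⟨a, b⟩, ⟨c, ⟨f, g⟩⟩⟩ ⟨⟨a', b'⟩, ⟨c', ⟨f', g'⟩⟩⟩
  simp only [embedC, Matrix.of_apply, Matrix.kroneckerMap_apply, Matrix.one_apply]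
  split_ifs <;> simp_all [mul_comm]

theorem embedA_conjTranspose (M : Matrix (D2 d) (D2 d) ℂ) : embedA Mᴴ = (embedA M)ᴴ := by
  ext p q
  simp only [embedA, Matrix.of_apply, Matrix.conjTranspose_apply, apply_ite star, star_zero]
  simp only [eq_comm]
theorem embedB_conjTranspose (M : Matrix (D2 d) (D2 d) ℂ) : embedB Mᴴ = (embedB M)ᴴ := by
  ext p q
  simp only [embedB, Matrix.of_apply, Matrix.conjTranspose_apply, apply_ite star, star_zero]
  simp only [eq_comm]
theorem embedC_conjTranspose (M : Matrix (D2 d) (D2 d) ℂ) : embedC Mᴴ = (embedC M)ᴴ := by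
  ext p q
  simp only [embedC, Matrix.of_apply, Matrix.conjTranspose_apply, apply_ite star, star_zero]
  simp only [eq_comm]

theorem embedA_one : embedA (1 : Matrix (D2 d) (D2 d) ℂ) = 1 := by
  rw [← Matrix.one_kronecker_one, embedA_kron]; simp only [Matrix.one_kronecker_one]
theorem embedB_one : embedB (1 : Matrix (D2 d) (D2 d) ℂ) = 1 := by
  rw [← Matrix.one_kronecker_one, embedB_kron]; simp only [Matrix.one_kronecker_one]
theorem embedC_one : embedC (1 : Matrix (D2 d) (D2 d) ℂ) = 1 := by
  rw [← Matrix.one_kronecker_one, embedC_kron]; simp only [Matrix.one_kronecker_one]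

/-- Bilinear induction on pairs. -/
theorem kron_induction₂ {m n m' n' : Type*} [Fintype m] [Fintype n] [DecidableEq m] [DecidableEq n]
    [Fintype m'] [Fintype n'] [DecidableEq m'] [DecidableEq n']
    {P : Matrix (m × n) (m × n) ℂ → Matrix (m' × n') (m' × n') ℂ → Prop}
    (h0 : ∀ N, P 0 N) (h0' : ∀ M, P M 0)
    (hadd : ∀ X Y N, P X N → P Y N → P (X + Y) N)
    (hadd' : ∀ M X Y, P M X → P M Y → P M (X + Y))
    (hk : ∀ X Y Z W, P (X ⊗ₖ Y) (Z ⊗ₖ W)) (M N) : P M N := by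
  induction M using kron_induction with
  | h0 => exact h0 N
  | hadd X Y hX hY => exact hadd _ _ _ hX hY
  | hk X Y =>
    induction N using kron_induction with
    | h0 => exact h0' _
    | hadd X Y hX hY => exact hadd' _ _ _ hX hY
    | hk Z W => exact hk _ _ _ _

theorem embedA_mul (M N : Matrix (D2 d) (D2 d) ℂ) : embedA (M * N) = embedA M * embedA N := by
  induction M, N using kron_induction₂ with
  | h0 N => simp [embedA_zero]
  | h0' N => simp [embedA_zero]
  | hadd X Y N hX hY => simp only [add_mul, embedA_add, hX, hY]
  | hadd' M X Y hX hY => simp only [mul_add, embedA_add, hX, hY]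
  | hk X Y Z W => simp only [← Matrix.mul_kronecker_mul, embedA_kron, mul_one]
theorem embedB_mul (M N : Matrix (D2 d) (D2 d) ℂ) : embedB (M * N) = embedB M * embedB N := by
  induction M, N using kron_induction₂ with
  | h0 N => simp [embedB_zero]
  | h0' N => simp [embedB_zero]
  | hadd X Y N hX hY => simp only [add_mul, embedB_add, hX, hY]
  | hadd' M X Y hX hY => simp only [mul_add, embedB_add, hX, hY]
  | hk X Y Z W => simp only [← Matrix.mul_kronecker_mul, embedB_kron, mul_one]
theorem embedC_mul (M N : Matrix (D2 d) (D2 d) ℂ) : embedC (M * N) = embedC M * embedC N := by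
  induction M, N using kron_induction₂ with
  | h0 N => simp [embedC_zero]
  | h0' N => simp [embedC_zero]
  | hadd X Y N hX hY => simp only [add_mul, embedC_add, hX, hY]
  | hadd' M X Y hX hY => simp only [mul_add, embedC_add, hX, hY]
  | hk X Y Z W => simp only [← Matrix.mul_kronecker_mul, embedC_kron, mul_one]

theorem comm_AB (M N : Matrix (D2 d) (D2 d) ℂ) : embedB N * embedA M = embedA M * embedB N := by
  induction M, N using kron_induction₂ with
  | h0 N => simp [embedA_zero]
  | h0' N => simp [embedB_zero]
  | hadd X Y N hX hY => simp only [add_mul, mul_add, embedA_add, hX, hY]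
  | hadd' M X Y hX hY => simp only [add_mul, mul_add, embedB_add, hX, hY]
  | hk X Y Z W => simp only [← Matrix.mul_kronecker_mul, embedA_kron, embedB_kron, mul_one, one_mul]
theorem comm_AC (M N : Matrix (D2 d) (D2 d) ℂ) : embedC N * embedA M = embedA M * embedC N := by
  induction M, N using kron_induction₂ with
  | h0 N => simp [embedA_zero]
  | h0' N => simp [embedC_zero]
  | hadd X Y N hX hY => simp only [add_mul, mul_add, embedA_add, hX, hY]
  | hadd' M X Y hX hY => simp only [add_mul, mul_add, embedC_add, hX, hY]
  | hk X Y Z W => simp only [← Matrix.mul_kronecker_mul, embedA_kron, embedC_kron, mul_one, one_mul]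
theorem comm_BC (M N : Matrix (D2 d) (D2 d) ℂ) : embedC N * embedB M = embedB M * embedC N := by
  induction M, N using kron_induction₂ with
  | h0 N => simp [embedB_zero]
  | h0' N => simp [embedC_zero]
  | hadd X Y N hX hY => simp only [add_mul, mul_add, embedB_add, hX, hY]
  | hadd' M X Y hX hY => simp only [add_mul, mul_add, embedC_add, hX, hY]
  | hk X Y Z W => simp only [← Matrix.mul_kronecker_mul, embedB_kron, embedC_kron, mul_one, one_mul]
end embeds

/-! Abstract bipartite reductions. -/
section reds
variable {d : ℕ}

/-- Reduced observable on the second factor. -/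
def rd2 (σ : Matrix (Fin d) (Fin d) ℂ) (M : Matrix (D2 d) (D2 d) ℂ) : Matrix (Fin d) (Fin d) ℂ :=
  ptrace₁ (M * (σ ⊗ₖ (1 : Matrix (Fin d) (Fin d) ℂ)))
/-- Reduced observable on the first factor. -/
def rd1 (τ : Matrix (Fin d) (Fin d) ℂ) (M : Matrix (D2 d) (D2 d) ℂ) : Matrix (Fin d) (Fin d) ℂ :=
  ptrace₂ (M * ((1 : Matrix (Fin d) (Fin d) ℂ) ⊗ₖ τ))

theorem ptrace₁_add (M N : Matrix (D2 d) (D2 d) ℂ) : ptrace₁ (M + N) = ptrace₁ M + ptrace₁ N := by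
  ext; simp [ptrace₁, Finset.sum_add_distrib]
theorem ptrace₂_add (M N : Matrix (D2 d) (D2 d) ℂ) : ptrace₂ (M + N) = ptrace₂ M + ptrace₂ N := by
  ext; simp [ptrace₂, Finset.sum_add_distrib]
theorem ptrace₁_zero : ptrace₁ (0 : Matrix (D2 d) (D2 d) ℂ) = 0 := by
  ext; simp [ptrace₁]
theorem ptrace₂_zero : ptrace₂ (0 : Matrix (D2 d) (D2 d) ℂ) = 0 := by
  ext; simp [ptrace₂]
theorem ptrace₁_kron (X Y : Matrix (Fin d) (Fin d) ℂ) : ptrace₁ (X ⊗ₖ Y) = X.trace • Y := by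
  ext; simp [ptrace₁, Matrix.trace, Finset.sum_mul]
theorem ptrace₂_kron (X Y : Matrix (Fin d) (Fin d) ℂ) : ptrace₂ (X ⊗ₖ Y) = Y.trace • X := by
  ext; simp [ptrace₂, Matrix.trace, Finset.mul_sum, mul_comm]

theorem trace_ptrace₁ (M : Matrix (D2 d) (D2 d) ℂ) : (ptrace₁ M).trace = M.trace := by
  simp only [ptrace₁, Matrix.trace, Matrix.diag, Matrix.of_apply, Fintype.sum_prod_type]
  exact Finset.sum_comm
theorem trace_ptrace₂ (M : Matrix (D2 d) (D2 d) ℂ) : (ptrace₂ M).trace = M.trace := by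
  simp only [ptrace₂, Matrix.trace, Matrix.diag, Matrix.of_apply, Fintype.sum_prod_type]

theorem trace_mul_ptrace₁ (ρ : Matrix (D2 d) (D2 d) ℂ) (X : Matrix (Fin d) (Fin d) ℂ) :
    (((1 : Matrix (Fin d) (Fin d) ℂ) ⊗ₖ X) * ρ).trace = (X * ptrace₁ ρ).trace := by
  induction ρ using kron_induction with
  | h0 => simp [ptrace₁_zero]
  | hadd M N hM hN => simp [ptrace₁_add, mul_add, hM, hN]
  | hk M N => simp [ptrace₁_kron, ← Matrix.mul_kronecker_mul, Matrix.trace_kronecker]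
theorem trace_mul_ptrace₂ (ρ : Matrix (D2 d) (D2 d) ℂ) (X : Matrix (Fin d) (Fin d) ℂ) :
    ((X ⊗ₖ (1 : Matrix (Fin d) (Fin d) ℂ)) * ρ).trace = (X * ptrace₂ ρ).trace := by
  induction ρ using kron_induction with
  | h0 => simp [ptrace₂_zero]
  | hadd M N hM hN => simp [ptrace₂_add, mul_add, hM, hN]
  | hk M N => simp [ptrace₂_kron, ← Matrix.mul_kronecker_mul, Matrix.trace_kronecker, mul_comm]

theorem rd1_add (σ) (M N : Matrix (D2 d) (D2 d) ℂ) : rd1 σ (M + N) = rd1 σ M + rd1 σ N := by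
  simp [rd1, add_mul, ptrace₂_add]
theorem rd2_add (σ) (M N : Matrix (D2 d) (D2 d) ℂ) : rd2 σ (M + N) = rd2 σ M + rd2 σ N := by
  simp [rd2, add_mul, ptrace₁_add]
theorem rd1_zero (σ) : rd1 σ (0 : Matrix (D2 d) (D2 d) ℂ) = 0 := by
  simp [rd1, ptrace₂_zero]
theorem rd2_zero (σ) : rd2 σ (0 : Matrix (D2 d) (D2 d) ℂ) = 0 := by
  simp [rd2, ptrace₁_zero]
theorem rd1_kron (τ X Y : Matrix (Fin d) (Fin d) ℂ) : rd1 τ (X ⊗ₖ Y) = (Y * τ).trace • X := by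
  simp [rd1, ← Matrix.mul_kronecker_mul, ptrace₂_kron]
theorem rd2_kron (τ X Y : Matrix (Fin d) (Fin d) ℂ) : rd2 τ (X ⊗ₖ Y) = (X * τ).trace • Y := by
  simp [rd2, ← Matrix.mul_kronecker_mul, ptrace₁_kron]

theorem tr_left1 (σ τ X : Matrix (Fin d) (Fin d) ℂ) (M : Matrix (D2 d) (D2 d) ℂ) :
    ((X ⊗ₖ (1 : Matrix (Fin d) (Fin d) ℂ)) * M * (σ ⊗ₖ τ)).trace = (X * rd1 τ M * σ).trace := by
  induction M using kron_induction with
  | h0 => simp [rd1_zero]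
  | hadd M N hM hN => simp [rd1_add, mul_add, add_mul, hM, hN]
  | hk M N => simp [rd1_kron, ← Matrix.mul_kronecker_mul, Matrix.trace_kronecker, mul_comm]
theorem tr_right1 (σ τ X : Matrix (Fin d) (Fin d) ℂ) (M : Matrix (D2 d) (D2 d) ℂ) :
    (M * (X ⊗ₖ (1 : Matrix (Fin d) (Fin d) ℂ)) * (σ ⊗ₖ τ)).trace = (rd1 τ M * X * σ).trace := by
  induction M using kron_induction with
  | h0 => simp [rd1_zero]
  | hadd M N hM hN => simp [rd1_add, mul_add, add_mul, hM, hN]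
  | hk M N => simp [rd1_kron, ← Matrix.mul_kronecker_mul, Matrix.trace_kronecker, mul_comm]
theorem tr_left2 (σ τ X : Matrix (Fin d) (Fin d) ℂ) (M : Matrix (D2 d) (D2 d) ℂ) :
    (((1 : Matrix (Fin d) (Fin d) ℂ) ⊗ₖ X) * M * (σ ⊗ₖ τ)).trace = (X * rd2 σ M * τ).trace := by
  induction M using kron_induction with
  | h0 => simp [rd2_zero]
  | hadd M N hM hN => simp [rd2_add, mul_add, add_mul, hM, hN]
  | hk M N => simp [rd2_kron, ← Matrix.mul_kronecker_mul, Matrix.trace_kronecker]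
theorem tr_right2 (σ τ X : Matrix (Fin d) (Fin d) ℂ) (M : Matrix (D2 d) (D2 d) ℂ) :
    (M * ((1 : Matrix (Fin d) (Fin d) ℂ) ⊗ₖ X) * (σ ⊗ₖ τ)).trace = (rd2 σ M * X * τ).trace := by
  induction M using kron_induction with
  | h0 => simp [rd2_zero]
  | hadd M N hM hN => simp [rd2_add, mul_add, add_mul, hM, hN]
  | hk M N => simp [rd2_kron, ← Matrix.mul_kronecker_mul, Matrix.trace_kronecker]
theorem tr_rd1 (σ τ : Matrix (Fin d) (Fin d) ℂ) (M : Matrix (D2 d) (D2 d) ℂ) :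
    (rd1 τ M * σ).trace = (M * (σ ⊗ₖ τ)).trace := by
  have := tr_left1 σ τ 1 M; simpa using this.symm
theorem tr_rd2 (σ τ : Matrix (Fin d) (Fin d) ℂ) (M : Matrix (D2 d) (D2 d) ℂ) :
    (rd2 σ M * τ).trace = (M * (σ ⊗ₖ τ)).trace := by
  have := tr_left2 σ τ 1 M; simpa using this.symm

theorem rd1_conj (τ : Matrix (Fin d) (Fin d) ℂ) (hτ : τ.IsHermitian) (M : Matrix (D2 d) (D2 d) ℂ) :
    (rd1 τ M)ᴴ = rd1 τ Mᴴ := by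
  induction M using kron_induction with
  | h0 => simp [rd1_zero]
  | hadd M N hM hN => simp [rd1_add, hM, hN]
  | hk M N =>
    rw [Matrix.conjTranspose_kronecker, rd1_kron, rd1_kron, Matrix.conjTranspose_smul,
      ← Matrix.trace_conjTranspose, Matrix.conjTranspose_mul, hτ.eq, Matrix.trace_mul_comm]
theorem rd2_conj (τ : Matrix (Fin d) (Fin d) ℂ) (hτ : τ.IsHermitian) (M : Matrix (D2 d) (D2 d) ℂ) :
    (rd2 τ M)ᴴ = rd2 τ Mᴴ := by
  induction M using kron_induction with
  | h0 => simp [rd2_zero]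
  | hadd M N hM hN => simp [rd2_add, hM, hN]
  | hk M N =>
    rw [Matrix.conjTranspose_kronecker, rd2_kron, rd2_kron, Matrix.conjTranspose_smul,
      ← Matrix.trace_conjTranspose, Matrix.conjTranspose_mul, hτ.eq, Matrix.trace_mul_comm]

theorem ptrace₁_posSemidef {ρ : Matrix (D2 d) (D2 d) ℂ} (h : ρ.PosSemidef) :
    (ptrace₁ ρ).PosSemidef := by
  have : ptrace₁ ρ = ∑ k, ρ.submatrix (fun i => (k, i)) (fun i => (k, i)) := by
    ext i j; simp [ptrace₁, Matrix.sum_apply]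
  rw [this]
  exact Matrix.posSemidef_sum _ fun k _ => h.submatrix _
theorem ptrace₂_posSemidef {ρ : Matrix (D2 d) (D2 d) ℂ} (h : ρ.PosSemidef) :
    (ptrace₂ ρ).PosSemidef := by
  have : ptrace₂ ρ = ∑ k, ρ.submatrix (fun i => (i, k)) (fun i => (i, k)) := by
    ext i j; simp [ptrace₂, Matrix.sum_apply]
  rw [this]
  exact Matrix.posSemidef_sum _ fun k _ => h.submatrix _

theorem IsDensity.pt1 {ρ : Matrix (D2 d) (D2 d) ℂ} (h : IsDensity ρ) : IsDensity (ptrace₁ ρ) :=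
  ⟨ptrace₁_posSemidef h.1, by rw [trace_ptrace₁, h.2]⟩
theorem IsDensity.pt2 {ρ : Matrix (D2 d) (D2 d) ℂ} (h : IsDensity ρ) : IsDensity (ptrace₂ ρ) :=
  ⟨ptrace₂_posSemidef h.1, by rw [trace_ptrace₂, h.2]⟩
end reds

/-! Gram matrices. -/
section gram

theorem gram_posSemidef {n ι : Type*} [Fintype n] [DecidableEq n] [Fintype ι]
    (N : ι → Matrix n n ℂ) (ρ : Matrix n n ℂ) (hρ : ρ.PosSemidef) :
    (Matrix.of fun i j => ((N i)ᴴ * N j * ρ).trace : Matrix ι ι ℂ).PosSemidef := by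
  refine Matrix.PosSemidef.of_dotProduct_mulVec_nonneg ?_ ?_
  · ext i j
    simp only [Matrix.conjTranspose_apply, Matrix.of_apply]
    rw [← Matrix.trace_conjTranspose]
    simp only [Matrix.conjTranspose_mul, Matrix.conjTranspose_conjTranspose, hρ.1.eq]
    rw [Matrix.trace_mul_comm]
  · intro x
    have h : star x ⬝ᵥ ((Matrix.of fun i j => ((N i)ᴴ * N j * ρ).trace : Matrix ι ι ℂ) *ᵥ x)
        = ((∑ j, x j • N j) * ρ * (∑ j, x j • N j)ᴴ).trace := by
      rw [Matrix.trace_mul_comm, ← Matrix.mul_assoc]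
      simp only [dotProduct, Matrix.mulVec, Matrix.of_apply, Matrix.conjTranspose_sum,
        Matrix.conjTranspose_smul, Finset.sum_mul, Finset.mul_sum, Matrix.trace_sum,
        Matrix.smul_mul, Matrix.mul_smul, Matrix.trace_smul, smul_eq_mul, Pi.star_apply]
      rw [Finset.sum_comm]
      refine Finset.sum_congr rfl fun i _ => Finset.sum_congr rfl fun j _ => ?_
      ring
    rw [h]
    exact (hρ.mul_mul_conjTranspose_same _).trace_nonneg

theorem covMat_posSemidef {n ι : Type*} [Fintype n] [DecidableEq n] [Fintype ι]
    (M : ι → Matrix n n ℂ) (ρ : Matrix n n ℂ) (hM : ∀ i, (M i).IsHermitian) (hρ : IsDensity ρ) :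
    (covMat M ρ).PosSemidef := by
  have h : covMat M ρ = Matrix.of fun i j =>
      ((M i - (M i * ρ).trace • 1)ᴴ * (M j - (M j * ρ).trace • 1) * ρ).trace := by
    ext i j
    have hs : star ((M i * ρ).trace) = (M i * ρ).trace := by
      rw [← Matrix.trace_conjTranspose, Matrix.conjTranspose_mul, (hM i).eq, hρ.1.1.eq,
        Matrix.trace_mul_comm]
    simp only [covMat, Matrix.of_apply, Matrix.conjTranspose_sub, Matrix.conjTranspose_smul,
      Matrix.conjTranspose_one, hs, (hM i).eq, sub_mul, mul_sub, Matrix.smul_mul, Matrix.mul_smul,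
      one_mul, mul_one, Matrix.trace_sub, Matrix.trace_smul, hρ.2, smul_eq_mul]
    ring
  rw [h]
  exact gram_posSemidef _ _ hρ.1

variable {d : ℕ}
/-- Doubly centred observable. -/
def ctr (σ τ : Matrix (Fin d) (Fin d) ℂ) (M : Matrix (D2 d) (D2 d) ℂ) : Matrix (D2 d) (D2 d) ℂ :=
  M - rd1 τ M ⊗ₖ (1 : Matrix (Fin d) (Fin d) ℂ) - (1 : Matrix (Fin d) (Fin d) ℂ) ⊗ₖ rd2 σ M
    + (M * (σ ⊗ₖ τ)).trace • (1 : Matrix (D2 d) (D2 d) ℂ)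

theorem ctr_gram (σ τ : Matrix (Fin d) (Fin d) ℂ) (hσ : IsDensity σ) (hτ : IsDensity τ)
    (M N : Matrix (D2 d) (D2 d) ℂ) (hM : M.IsHermitian) :
    ((ctr σ τ M)ᴴ * ctr σ τ N * (σ ⊗ₖ τ)).trace =
      (M * N * (σ ⊗ₖ τ)).trace - (rd1 τ M * rd1 τ N * σ).trace - (rd2 σ M * rd2 σ N * τ).trace
      + (M * (σ ⊗ₖ τ)).trace * (N * (σ ⊗ₖ τ)).trace := by
  have hH : (ctr σ τ M)ᴴ = ctr σ τ M := by
    have hs : star ((M * (σ ⊗ₖ τ)).trace) = (M * (σ ⊗ₖ τ)).trace := by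
      rw [← Matrix.trace_conjTranspose, Matrix.conjTranspose_mul, hM.eq,
        Matrix.conjTranspose_kronecker, hσ.1.1.eq, hτ.1.1.eq, Matrix.trace_mul_comm]
    simp only [ctr, Matrix.conjTranspose_add, Matrix.conjTranspose_sub, Matrix.conjTranspose_smul,
      Matrix.conjTranspose_kronecker, Matrix.conjTranspose_one, hs, hM.eq,
      rd1_conj τ hτ.1.1, rd2_conj σ hσ.1.1]
  rw [hH]
  have e1 : ((rd1 τ M ⊗ₖ (1 : Matrix (Fin d) (Fin d) ℂ)) * ((1 : Matrix (Fin d) (Fin d) ℂ) ⊗ₖ rd2 σ N)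
      * (σ ⊗ₖ τ)).trace = (M * (σ ⊗ₖ τ)).trace * (N * (σ ⊗ₖ τ)).trace := by
    rw [← Matrix.mul_kronecker_mul, ← Matrix.mul_kronecker_mul, Matrix.trace_kronecker]
    simp [tr_rd1, tr_rd2]
  have e2 : (((1 : Matrix (Fin d) (Fin d) ℂ) ⊗ₖ rd2 σ M) * (rd1 τ N ⊗ₖ (1 : Matrix (Fin d) (Fin d) ℂ))
      * (σ ⊗ₖ τ)).trace = (M * (σ ⊗ₖ τ)).trace * (N * (σ ⊗ₖ τ)).trace := by
    rw [← Matrix.mul_kronecker_mul, ← Matrix.mul_kronecker_mul, Matrix.trace_kronecker]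
    simp [tr_rd1, tr_rd2, mul_comm]
  have e3 : ((rd1 τ M ⊗ₖ (1 : Matrix (Fin d) (Fin d) ℂ)) * (rd1 τ N ⊗ₖ (1 : Matrix (Fin d) (Fin d) ℂ))
      * (σ ⊗ₖ τ)).trace = (rd1 τ M * rd1 τ N * σ).trace := by
    rw [← Matrix.mul_kronecker_mul, ← Matrix.mul_kronecker_mul, Matrix.trace_kronecker]
    simp [hτ.2]
  have e4 : (((1 : Matrix (Fin d) (Fin d) ℂ) ⊗ₖ rd2 σ M) * ((1 : Matrix (Fin d) (Fin d) ℂ) ⊗ₖ rd2 σ N)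
      * (σ ⊗ₖ τ)).trace = (rd2 σ M * rd2 σ N * τ).trace := by
    rw [← Matrix.mul_kronecker_mul, ← Matrix.mul_kronecker_mul, Matrix.trace_kronecker]
    simp [hσ.2]
  have f1 : ∀ M, ((rd1 τ M ⊗ₖ (1 : Matrix (Fin d) (Fin d) ℂ)) * (σ ⊗ₖ τ)).trace
      = (M * (σ ⊗ₖ τ)).trace := fun M => by
    rw [← Matrix.mul_kronecker_mul, Matrix.trace_kronecker]; simp [hτ.2, tr_rd1]
  have f2 : ∀ M, (((1 : Matrix (Fin d) (Fin d) ℂ) ⊗ₖ rd2 σ M) * (σ ⊗ₖ τ)).trace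
      = (M * (σ ⊗ₖ τ)).trace := fun M => by
    rw [← Matrix.mul_kronecker_mul, Matrix.trace_kronecker]; simp [hσ.2, tr_rd2]
  have g : (σ ⊗ₖ τ).trace = 1 := by rw [Matrix.trace_kronecker, hσ.2, hτ.2, one_mul]
  simp only [ctr, add_mul, mul_add, sub_mul, mul_sub, Matrix.smul_mul, Matrix.mul_smul, one_mul,
    mul_one, Matrix.trace_add, Matrix.trace_sub, Matrix.trace_smul, smul_eq_mul,
    tr_left1, tr_right1, tr_left2, tr_right2, e1, e2, e3, e4, f1, f2, g]
  simp only [← tr_left1, ← tr_left2]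
  ring
end gram
section omega
variable {d : ℕ} (ρa ρb ρc : Matrix (D2 d) (D2 d) ℂ)

theorem omA (ha : ρa.trace = 1) (M : Matrix (D2 d) (D2 d) ℂ) :
    (embedA M * btnState ρa ρb ρc).trace = (M * (ptrace₁ ρb ⊗ₖ ptrace₂ ρc)).trace := by
  induction M using kron_induction with
  | h0 => simp [embedA_zero]
  | hadd M N hM hN => simp [embedA_add, add_mul, hM, hN]
  | hk X Y =>
    simp only [embedA_kron, btnState, ← Matrix.mul_kronecker_mul, Matrix.trace_kronecker,
      trace_mul_ptrace₁, trace_mul_ptrace₂, one_mul, ha, mul_one]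
theorem omB (hb : ρb.trace = 1) (M : Matrix (D2 d) (D2 d) ℂ) :
    (embedB M * btnState ρa ρb ρc).trace = (M * (ptrace₁ ρc ⊗ₖ ptrace₂ ρa)).trace := by
  induction M using kron_induction with
  | h0 => simp [embedB_zero]
  | hadd M N hM hN => simp [embedB_add, add_mul, hM, hN]
  | hk X Y =>
    simp only [embedB_kron, btnState, ← Matrix.mul_kronecker_mul, Matrix.trace_kronecker,
      trace_mul_ptrace₁, trace_mul_ptrace₂, one_mul, hb, mul_one]
theorem omC (hc : ρc.trace = 1) (M : Matrix (D2 d) (D2 d) ℂ) :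
    (embedC M * btnState ρa ρb ρc).trace = (M * (ptrace₁ ρa ⊗ₖ ptrace₂ ρb)).trace := by
  induction M using kron_induction with
  | h0 => simp [embedC_zero]
  | hadd M N hM hN => simp [embedC_add, add_mul, hM, hN]
  | hk X Y =>
    simp only [embedC_kron, btnState, ← Matrix.mul_kronecker_mul, Matrix.trace_kronecker,
      trace_mul_ptrace₁, trace_mul_ptrace₂, one_mul, hc, mul_one]
    ring

theorem omAB (M N : Matrix (D2 d) (D2 d) ℂ) :
    (embedA M * embedB N * btnState ρa ρb ρc).trace =
      ((rd2 (ptrace₁ ρb) M ⊗ₖ rd1 (ptrace₂ ρa) N) * ρc).trace := by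
  induction M, N using kron_induction₂ with
  | h0 N => simp [embedA_zero, rd2_zero]
  | h0' N => simp [embedB_zero, rd1_zero]
  | hadd X Y N hX hY => simp [embedA_add, rd2_add, add_mul, Matrix.add_kronecker, hX, hY]
  | hadd' M X Y hX hY =>
    simp [embedB_add, rd1_add, mul_add, add_mul, Matrix.kronecker_add, hX, hY]
  | hk X Y Z W =>
    simp only [embedA_kron, embedB_kron, btnState, ← Matrix.mul_kronecker_mul,
      Matrix.trace_kronecker, trace_mul_ptrace₁, trace_mul_ptrace₂, one_mul, mul_one, rd1_kron,
      rd2_kron, Matrix.smul_kronecker, Matrix.kronecker_smul, Matrix.smul_mul, Matrix.trace_smul,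
      smul_eq_mul]
    ring
theorem omAC (M N : Matrix (D2 d) (D2 d) ℂ) :
    (embedA M * embedC N * btnState ρa ρb ρc).trace =
      ((rd2 (ptrace₁ ρa) N ⊗ₖ rd1 (ptrace₂ ρc) M) * ρb).trace := by
  induction M, N using kron_induction₂ with
  | h0 N => simp [embedA_zero, rd1_zero]
  | h0' N => simp [embedC_zero, rd2_zero]
  | hadd X Y N hX hY => simp [embedA_add, rd1_add, add_mul, Matrix.kronecker_add, hX, hY]
  | hadd' M X Y hX hY =>
    simp [embedC_add, rd2_add, mul_add, add_mul, Matrix.add_kronecker, hX, hY]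
  | hk X Y Z W =>
    simp only [embedA_kron, embedC_kron, btnState, ← Matrix.mul_kronecker_mul,
      Matrix.trace_kronecker, trace_mul_ptrace₁, trace_mul_ptrace₂, one_mul, mul_one, rd1_kron,
      rd2_kron, Matrix.smul_kronecker, Matrix.kronecker_smul, Matrix.smul_mul, Matrix.trace_smul,
      smul_eq_mul]
    ring
theorem omBC (M N : Matrix (D2 d) (D2 d) ℂ) :
    (embedB M * embedC N * btnState ρa ρb ρc).trace =
      ((rd2 (ptrace₁ ρc) M ⊗ₖ rd1 (ptrace₂ ρb) N) * ρa).trace := by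
  induction M, N using kron_induction₂ with
  | h0 N => simp [embedB_zero, rd2_zero]
  | h0' N => simp [embedC_zero, rd1_zero]
  | hadd X Y N hX hY => simp [embedB_add, rd2_add, add_mul, Matrix.add_kronecker, hX, hY]
  | hadd' M X Y hX hY =>
    simp [embedC_add, rd1_add, mul_add, add_mul, Matrix.kronecker_add, hX, hY]
  | hk X Y Z W =>
    simp only [embedB_kron, embedC_kron, btnState, ← Matrix.mul_kronecker_mul,
      Matrix.trace_kronecker, trace_mul_ptrace₁, trace_mul_ptrace₂, one_mul, mul_one, rd1_kron,
      rd2_kron, Matrix.smul_kronecker, Matrix.kronecker_smul, Matrix.smul_mul, Matrix.trace_smul,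
      smul_eq_mul]
end omega

section decomposition
variable {d : ℕ} {ι κ μ : Type*} [Fintype ι] [Fintype κ] [Fintype μ]

theorem R_posSemidef (ρa ρb ρc : Matrix (D2 d) (D2 d) ℂ)
    (hρa : IsDensity ρa) (hρb : IsDensity ρb) (hρc : IsDensity ρc)
    (A : ι → Matrix (D2 d) (D2 d) ℂ) (B : κ → Matrix (D2 d) (D2 d) ℂ)
    (C : μ → Matrix (D2 d) (D2 d) ℂ)
    (hAherm : ∀ i, (A i).IsHermitian)
    (hBherm : ∀ j, (B j).IsHermitian)
    (hCherm : ∀ k, (C k).IsHermitian) :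
    (covMat
      (Sum.elim (fun i => embedA (A i))
        (Sum.elim (fun j => embedB (B j)) (fun k => embedC (C k))))
      (btnState ρa ρb ρc)
    - covMat
      (Sum.elim (fun i => redA2 ρb (A i) ⊗ₖ (1 : Matrix (Fin d) (Fin d) ℂ))
        (Sum.elim (fun j => (1 : Matrix (Fin d) (Fin d) ℂ) ⊗ₖ redB1 ρa (B j))
          (fun _ => (0 : Matrix (D2 d) (D2 d) ℂ)))) ρc
    - covMat
      (Sum.elim (fun i => (1 : Matrix (Fin d) (Fin d) ℂ) ⊗ₖ redA1 ρc (A i))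
        (Sum.elim (fun _ => (0 : Matrix (D2 d) (D2 d) ℂ))
          (fun k => redC2 ρa (C k) ⊗ₖ (1 : Matrix (Fin d) (Fin d) ℂ)))) ρb
    - covMat
      (Sum.elim (fun _ => (0 : Matrix (D2 d) (D2 d) ℂ))
        (Sum.elim (fun j => redB2 ρc (B j) ⊗ₖ (1 : Matrix (Fin d) (Fin d) ℂ))
          (fun k => (1 : Matrix (Fin d) (Fin d) ℂ) ⊗ₖ redC1 ρb (C k)))) ρa).PosSemidef := by
  have e1 : ∀ M, redA2 ρb M = rd2 (ptrace₁ ρb) M := fun _ => rfl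
  have e2 : ∀ M, redB1 ρa M = rd1 (ptrace₂ ρa) M := fun _ => rfl
  have e3 : ∀ M, redA1 ρc M = rd1 (ptrace₂ ρc) M := fun _ => rfl
  have e4 : ∀ M, redC2 ρa M = rd2 (ptrace₁ ρa) M := fun _ => rfl
  have e5 : ∀ M, redB2 ρc M = rd2 (ptrace₁ ρc) M := fun _ => rfl
  have e6 : ∀ M, redC1 ρb M = rd1 (ptrace₂ ρb) M := fun _ => rfl
  simp only [e1, e2, e3, e4, e5, e6]
  have GA := gram_posSemidef
    (Sum.elim (fun i => ctr (ptrace₁ ρb) (ptrace₂ ρc) (A i))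
      (Sum.elim (fun _ : κ => 0) (fun _ : μ => 0))) _
      (hρb.pt1.1.kronecker hρc.pt2.1)
  have GB := gram_posSemidef
    (Sum.elim (fun _ : ι => 0)
      (Sum.elim (fun j => ctr (ptrace₁ ρc) (ptrace₂ ρa) (B j)) (fun _ : μ => 0))) _
      (hρc.pt1.1.kronecker hρa.pt2.1)
  have GC := gram_posSemidef
    (Sum.elim (fun _ : ι => 0)
      (Sum.elim (fun _ : κ => 0) (fun k => ctr (ptrace₁ ρa) (ptrace₂ ρb) (C k)))) _
      (hρa.pt1.1.kronecker hρb.pt2.1)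
  convert (GA.add GB).add GC using 1
  ext p q
  have kA := fun i j => ctr_gram _ _ hρb.pt1 hρc.pt2 (A i) (A j) (hAherm i)
  have kB := fun i j => ctr_gram _ _ hρc.pt1 hρa.pt2 (B i) (B j) (hBherm i)
  have kC := fun i j => ctr_gram _ _ hρa.pt1 hρb.pt2 (C i) (C j) (hCherm i)
  rcases p with i | i | i <;> rcases q with j | j | j <;>
    simp only [covMat, Matrix.sub_apply, Matrix.add_apply, Matrix.of_apply, Sum.elim_inl,
      Sum.elim_inr, kA, kB, kC, comm_AB, comm_AC, comm_BC, omAB, omAC, omBC,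
      ← embedA_mul, ← embedB_mul, ← embedC_mul, omA _ _ _ hρa.2, omB _ _ _ hρb.2, omC _ _ _ hρc.2,
      ← Matrix.mul_kronecker_mul, trace_mul_ptrace₁, trace_mul_ptrace₂, tr_rd1, tr_rd2,
      one_mul, mul_one, zero_mul, mul_zero, Matrix.trace_zero, Matrix.conjTranspose_zero] <;>
    ring
end decomposition

section orth

theorem covMat_lin {n ι : Type*} [Fintype n] [Fintype ι]
    (M M' : ι → Matrix n n ℂ) (ρ : Matrix n n ℂ) (O : Matrix ι ι ℂ)
    (h : ∀ i, M' i = ∑ k, O k i • M k) : covMat M' ρ = Oᵀ * covMat M ρ * O := by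
  ext i j
  simp only [covMat, Matrix.of_apply, h, Matrix.mul_apply, Matrix.transpose_apply,
    Finset.sum_mul, Finset.mul_sum, Matrix.smul_mul, Matrix.mul_smul, Matrix.trace_sum,
    Matrix.trace_smul, smul_eq_mul, mul_sub, sub_mul, Finset.sum_sub_distrib]
  congr 1
  · first
    | (refine Finset.sum_congr rfl fun k _ => Finset.sum_congr rfl fun l _ => ?_; ring)
    | (rw [Finset.sum_comm]
       refine Finset.sum_congr rfl fun k _ => Finset.sum_congr rfl fun l _ => ?_; ring)
  · first
    | (refine Finset.sum_congr rfl fun k _ => Finset.sum_congr rfl fun l _ => ?_; ring)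
    | (rw [Finset.sum_comm]
       refine Finset.sum_congr rfl fun k _ => Finset.sum_congr rfl fun l _ => ?_; ring)

theorem covMat_conj {n ι : Type*} [Fintype n] [DecidableEq n]
    (M : ι → Matrix n n ℂ) (ρ V : Matrix n n ℂ) (hV : V * Vᴴ = 1) :
    covMat M (V * ρ * Vᴴ) = covMat (fun i => Vᴴ * M i * V) ρ := by
  have key : ∀ X : Matrix n n ℂ, (X * (V * ρ * Vᴴ)).trace = (Vᴴ * X * V * ρ).trace := fun X => by
    rw [← Matrix.mul_assoc, Matrix.trace_mul_comm]; simp only [Matrix.mul_assoc]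
  ext i j
  simp only [covMat, Matrix.of_apply, key]
  have : Vᴴ * M i * V * (Vᴴ * M j * V) = Vᴴ * (M i * M j) * V := by
    calc _ = Vᴴ * M i * (V * Vᴴ) * M j * V := by simp only [Matrix.mul_assoc]
      _ = _ := by rw [hV]; simp only [Matrix.mul_assoc, Matrix.one_mul]
  rw [this]

theorem expand {d : ℕ} (hd : 1 ≤ d) (A : Fin (d ^ 4) → Matrix (D2 d) (D2 d) ℂ)
    (hA : ∀ i i', (A i * A i').trace = if i = i' then ((d : ℂ) ^ 2) else 0)
    (X : Matrix (D2 d) (D2 d) ℂ) :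
    X = ∑ k, ((A k * X).trace / (d : ℂ) ^ 2) • A k := by
  have hd0 : ((d : ℂ) ^ 2) ≠ 0 := by
    have : (d : ℂ) ≠ 0 := by exact_mod_cast (by omega : d ≠ 0)
    positivity
  have tr : ∀ (c : Fin (d ^ 4) → ℂ) k, (A k * ∑ i, c i • A i).trace = c k * (d : ℂ) ^ 2 := by
    intro c k
    simp [Finset.mul_sum, Matrix.trace_sum, hA]
  have li : LinearIndependent ℂ A := by
    rw [Fintype.linearIndependent_iff]
    intro g hg i
    have := tr g i
    rw [hg] at this
    simpa [hd0, pow_eq_zero_iff] using this.symm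
  have sp : Submodule.span ℂ (Set.range A) = ⊤ := by
    apply li.span_eq_top_of_card_eq_finrank'
    simp [Module.finrank_matrix]; ring
  have hX : X ∈ Submodule.span ℂ (Set.range A) := by rw [sp]; trivial
  obtain ⟨c, rfl⟩ := (Submodule.mem_span_range_iff_exists_fun ℂ).1 hX
  refine Finset.sum_congr rfl fun k _ => ?_
  rw [tr, mul_div_cancel_right₀ _ hd0]

theorem exists_orth {d : ℕ} (hd : 1 ≤ d) (A : Fin (d ^ 4) → Matrix (D2 d) (D2 d) ℂ)
    (hAh : ∀ i, (A i).IsHermitian)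
    (hA : ∀ i i', (A i * A i').trace = if i = i' then ((d : ℂ) ^ 2) else 0)
    (U : Matrix (D2 d) (D2 d) ℂ) (hU : U ∈ Matrix.unitaryGroup (D2 d) ℂ) :
    ∃ O : Matrix (Fin (d ^ 4)) (Fin (d ^ 4)) ℝ, Oᵀ * O = 1 ∧
      ∀ i, Uᴴ * A i * U = ∑ k, (O k i : ℂ) • A k := by
  have hd0 : ((d : ℂ) ^ 2) ≠ 0 := by
    have : (d : ℂ) ≠ 0 := by exact_mod_cast (by omega : d ≠ 0)
    positivity
  have hUU : U * Uᴴ = 1 := (Matrix.mem_unitaryGroup_iff).1 hU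
  let c : Fin (d ^ 4) → Fin (d ^ 4) → ℂ := fun k i => (A k * (Uᴴ * A i * U)).trace / (d : ℂ) ^ 2
  have hreal : ∀ k i, ((c k i).re : ℂ) = c k i := by
    intro k i
    apply Complex.conj_eq_iff_re.1
    change star (c k i) = c k i
    simp only [c, star_div₀, star_pow, star_natCast]
    congr 1
    rw [← Matrix.trace_conjTranspose]
    simp only [Matrix.conjTranspose_mul, Matrix.conjTranspose_conjTranspose, (hAh _).eq]
    rw [Matrix.trace_mul_comm]; simp only [Matrix.mul_assoc]
  have hex : ∀ i, Uᴴ * A i * U = ∑ k, c k i • A k := fun i => expand hd A hA _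
  refine ⟨Matrix.of fun k i => (c k i).re, ?_, fun i => ?_⟩
  · ext i j
    apply Complex.ofReal_injective
    have h1 : (Uᴴ * A i * U * (Uᴴ * A j * U)).trace = if i = j then ((d : ℂ) ^ 2) else 0 := by
      rw [← hA]
      calc _ = (Uᴴ * (A i * (U * Uᴴ) * A j * U)).trace := by simp only [Matrix.mul_assoc]
        _ = _ := by
          rw [hUU, Matrix.trace_mul_comm, Matrix.mul_one, Matrix.mul_assoc, hUU, Matrix.mul_one]
    rw [hex i, hex j] at h1
    simp only [Finset.sum_mul, Finset.mul_sum, Matrix.trace_sum, Matrix.smul_mul, Matrix.mul_smul,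
      Matrix.trace_smul, hA, smul_eq_mul, mul_ite, mul_zero, Finset.sum_ite_eq,
      Finset.sum_ite_eq', Finset.mem_univ, if_true] at h1
    simp only [Matrix.mul_apply, Matrix.transpose_apply, Matrix.of_apply, Complex.ofReal_sum,
      Complex.ofReal_mul, hreal, Matrix.one_apply]
    apply mul_right_cancel₀ hd0
    rw [Finset.sum_mul]
    split_ifs with hij
    · simp only [hij, if_true] at h1 ⊢
      simp only [Complex.ofReal_one, one_mul]
      refine Eq.trans (Finset.sum_congr rfl fun k _ => by ring) h1
    · simp only [hij, if_false] at h1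
      simp only [Complex.ofReal_zero, zero_mul]
      refine Eq.trans (Finset.sum_congr rfl fun k _ => by ring) h1
  · simp only [Matrix.of_apply, hreal]; exact hex i

theorem embedA_sum {d : ℕ} {ι : Type*} (s : Finset ι) (f : ι → Matrix (D2 d) (D2 d) ℂ) :
    embedA (∑ i ∈ s, f i) = ∑ i ∈ s, embedA (f i) :=
  map_sum (AddMonoidHom.mk' embedA embedA_add) f s
theorem embedB_sum {d : ℕ} {ι : Type*} (s : Finset ι) (f : ι → Matrix (D2 d) (D2 d) ℂ) :
    embedB (∑ i ∈ s, f i) = ∑ i ∈ s, embedB (f i) :=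
  map_sum (AddMonoidHom.mk' embedB embedB_add) f s
theorem embedC_sum {d : ℕ} {ι : Type*} (s : Finset ι) (f : ι → Matrix (D2 d) (D2 d) ℂ) :
    embedC (∑ i ∈ s, f i) = ∑ i ∈ s, embedC (f i) :=
  map_sum (AddMonoidHom.mk' embedC embedC_add) f s

theorem conj_cancel {n : Type*} [Fintype n] [DecidableEq n] {U X : Matrix n n ℂ}
    (hU : Uᴴ * U = 1) (h : X * U = U * X) : Uᴴ * X * U = X := by
  rw [Matrix.mul_assoc, h, ← Matrix.mul_assoc, hU, Matrix.one_mul]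

theorem conj3 {n : Type*} [Fintype n] (a b c X : Matrix n n ℂ) :
    (a * b * c)ᴴ * X * (a * b * c) = cᴴ * (bᴴ * (aᴴ * X * a) * b) * c := by
  simp only [Matrix.conjTranspose_mul, Matrix.mul_assoc]
end orth

/-- For a triangle network state with local unitaries
`ρ_UTN = (U_A ⊗ U_B ⊗ U_C) ρ_BTN (U_A ⊗ U_B ⊗ U_C)†` and complete orthogonal
sets of local observables, there are real orthogonal matrices `O_A, O_B, O_C`
such that, with `O = O_A ⊕ O_B ⊕ O_C`,
`Γ(ρ_UTN) = Oᵀ Γ(ρ_BTN) O = Oᵀ (T_c + T_b + T_a + R) O`, where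
`T_c, T_b, T_a, R` are the positive semidefinite matrices of the block
decomposition of `Γ(ρ_BTN)`. -/
theorem stmt8 {d : ℕ} (hd : 1 ≤ d)
    (ρa ρb ρc : Matrix (D2 d) (D2 d) ℂ)
    (hρa : IsDensity ρa) (hρb : IsDensity ρb) (hρc : IsDensity ρc)
    (UA UB UC : Matrix (D2 d) (D2 d) ℂ)
    (hUA : UA ∈ Matrix.unitaryGroup (D2 d) ℂ)
    (hUB : UB ∈ Matrix.unitaryGroup (D2 d) ℂ)
    (hUC : UC ∈ Matrix.unitaryGroup (D2 d) ℂ)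
    -- complete orthogonal sets of observables on the parties' d²-dimensional spaces
    (A B C : Fin (d ^ 4) → Matrix (D2 d) (D2 d) ℂ)
    (hAherm : ∀ i, (A i).IsHermitian)
    (hBherm : ∀ j, (B j).IsHermitian)
    (hCherm : ∀ k, (C k).IsHermitian)
    (hAorth : ∀ i i', (A i * A i').trace = if i = i' then ((d : ℂ) ^ 2) else 0)
    (hBorth : ∀ j j', (B j * B j').trace = if j = j' then ((d : ℂ) ^ 2) else 0)
    (hCorth : ∀ k k', (C k * C k').trace = if k = k' then ((d : ℂ) ^ 2) else 0)
    (ρUTN : Matrix (TriIdx d) (TriIdx d) ℂ)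
    (hρUTN : ρUTN = (embedA UA * embedB UB * embedC UC) * btnState ρa ρb ρc *
      (embedA UA * embedB UB * embedC UC)ᴴ)
    (ΓUTN ΓBTN Tc Tb Ta R :
      Matrix (Fin (d ^ 4) ⊕ (Fin (d ^ 4) ⊕ Fin (d ^ 4)))
        (Fin (d ^ 4) ⊕ (Fin (d ^ 4) ⊕ Fin (d ^ 4))) ℂ)
    (hΓUTN : ΓUTN = covMat
      (Sum.elim (fun i => embedA (A i))
        (Sum.elim (fun j => embedB (B j)) (fun k => embedC (C k)))) ρUTN)
    (hΓBTN : ΓBTN = covMat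
      (Sum.elim (fun i => embedA (A i))
        (Sum.elim (fun j => embedB (B j)) (fun k => embedC (C k))))
      (btnState ρa ρb ρc))
    (hTc : Tc = covMat
      (Sum.elim (fun i => redA2 ρb (A i) ⊗ₖ (1 : Matrix (Fin d) (Fin d) ℂ))
        (Sum.elim (fun j => (1 : Matrix (Fin d) (Fin d) ℂ) ⊗ₖ redB1 ρa (B j))
          (fun _ => (0 : Matrix (D2 d) (D2 d) ℂ)))) ρc)
    (hTb : Tb = covMat
      (Sum.elim (fun i => (1 : Matrix (Fin d) (Fin d) ℂ) ⊗ₖ redA1 ρc (A i))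
        (Sum.elim (fun _ => (0 : Matrix (D2 d) (D2 d) ℂ))
          (fun k => redC2 ρa (C k) ⊗ₖ (1 : Matrix (Fin d) (Fin d) ℂ)))) ρb)
    (hTa : Ta = covMat
      (Sum.elim (fun _ => (0 : Matrix (D2 d) (D2 d) ℂ))
        (Sum.elim (fun j => redB2 ρc (B j) ⊗ₖ (1 : Matrix (Fin d) (Fin d) ℂ))
          (fun k => (1 : Matrix (Fin d) (Fin d) ℂ) ⊗ₖ redC1 ρb (C k)))) ρa)
    (hR : R = ΓBTN - Tc - Tb - Ta) :
    ∃ OA OB OC : Matrix (Fin (d ^ 4)) (Fin (d ^ 4)) ℝ,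
      OAᵀ * OA = 1 ∧ OBᵀ * OB = 1 ∧ OCᵀ * OC = 1 ∧
      (∀ O : Matrix (Fin (d ^ 4) ⊕ (Fin (d ^ 4) ⊕ Fin (d ^ 4)))
          (Fin (d ^ 4) ⊕ (Fin (d ^ 4) ⊕ Fin (d ^ 4))) ℂ,
        O = (Matrix.of fun p q => match p, q with
          | Sum.inl i, Sum.inl j => (OA i j : ℂ)
          | Sum.inr (Sum.inl i), Sum.inr (Sum.inl j) => (OB i j : ℂ)
          | Sum.inr (Sum.inr i), Sum.inr (Sum.inr j) => (OC i j : ℂ)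
          | _, _ => 0) →
        ΓUTN = Oᵀ * ΓBTN * O ∧ ΓUTN = Oᵀ * (Tc + Tb + Ta + R) * O) ∧
      Tc.PosSemidef ∧ Tb.PosSemidef ∧ Ta.PosSemidef ∧ R.PosSemidef := by
  obtain ⟨OA, hOA, hA⟩ := exists_orth hd A hAherm hAorth UA hUA
  obtain ⟨OB, hOB, hB⟩ := exists_orth hd B hBherm hBorth UB hUB
  obtain ⟨OC, hOC, hC⟩ := exists_orth hd C hCherm hCorth UC hUC
  have hsum : Tc + Tb + Ta + R = ΓBTN := by rw [hR]; abel
  refine ⟨OA, OB, OC, hOA, hOB, hOC, ?_, ?_, ?_, ?_, ?_⟩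
  · intro O hO
    rw [hsum, and_self]
    have uA : (embedA UA)ᴴ * embedA UA = 1 := by
      rw [← embedA_conjTranspose, ← embedA_mul, ← embedA_one]
      exact congrArg _ (Matrix.mem_unitaryGroup_iff'.1 hUA)
    have uB : (embedB UB)ᴴ * embedB UB = 1 := by
      rw [← embedB_conjTranspose, ← embedB_mul, ← embedB_one]
      exact congrArg _ (Matrix.mem_unitaryGroup_iff'.1 hUB)
    have uC : (embedC UC)ᴴ * embedC UC = 1 := by
      rw [← embedC_conjTranspose, ← embedC_mul, ← embedC_one]
      exact congrArg _ (Matrix.mem_unitaryGroup_iff'.1 hUC)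
    have hV : (embedA UA * embedB UB * embedC UC) * (embedA UA * embedB UB * embedC UC)ᴴ = 1 := by
      apply mul_eq_one_comm.1
      have := conj3 (embedA UA) (embedB UB) (embedC UC) 1
      simpa [uA, uB, uC] using this
    rw [hΓUTN, hΓBTN, hρUTN, covMat_conj _ _ _ hV]
    apply covMat_lin
    rintro (i | i | i)
    · simp only [Sum.elim_inl, conj3]
      rw [← embedA_conjTranspose, ← embedA_mul, ← embedA_mul,
        conj_cancel uB (comm_AB _ _).symm, conj_cancel uC (comm_AC _ _).symm, hA, embedA_sum]
      simp only [embedA_smul]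
      simp [hO, Fintype.sum_sum_type]
    · simp only [Sum.elim_inl, Sum.elim_inr, conj3]
      rw [conj_cancel uA (comm_AB _ _), ← embedB_conjTranspose, ← embedB_mul, ← embedB_mul,
        conj_cancel uC (comm_BC _ _).symm, hB, embedB_sum]
      simp only [embedB_smul]
      simp [hO, Fintype.sum_sum_type]
    · simp only [Sum.elim_inr, conj3]
      rw [conj_cancel uA (comm_AC _ _), conj_cancel uB (comm_BC _ _),
        ← embedC_conjTranspose, ← embedC_mul, ← embedC_mul, hC, embedC_sum]
      simp only [embedC_smul]
      simp [hO, Fintype.sum_sum_type]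
  · rw [hTc]
    refine covMat_posSemidef _ _ ?_ hρc
    rintro (i | i | i)
    · change (rd2 (ptrace₁ ρb) (A i) ⊗ₖ (1 : Matrix (Fin d) (Fin d) ℂ))ᴴ = rd2 (ptrace₁ ρb) (A i) ⊗ₖ 1
      rw [Matrix.conjTranspose_kronecker, rd2_conj _ hρb.pt1.1.1, (hAherm i).eq,
        Matrix.conjTranspose_one]
    · change ((1 : Matrix (Fin d) (Fin d) ℂ) ⊗ₖ rd1 (ptrace₂ ρa) (B i))ᴴ = 1 ⊗ₖ rd1 (ptrace₂ ρa) (B i)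
      rw [Matrix.conjTranspose_kronecker, rd1_conj _ hρa.pt2.1.1, (hBherm i).eq,
        Matrix.conjTranspose_one]
    · exact Matrix.isHermitian_zero
  · rw [hTb]
    refine covMat_posSemidef _ _ ?_ hρb
    rintro (i | i | i)
    · change ((1 : Matrix (Fin d) (Fin d) ℂ) ⊗ₖ rd1 (ptrace₂ ρc) (A i))ᴴ = 1 ⊗ₖ rd1 (ptrace₂ ρc) (A i)
      rw [Matrix.conjTranspose_kronecker, rd1_conj _ hρc.pt2.1.1, (hAherm i).eq,
        Matrix.conjTranspose_one]
    · exact Matrix.isHermitian_zero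
    · change (rd2 (ptrace₁ ρa) (C i) ⊗ₖ (1 : Matrix (Fin d) (Fin d) ℂ))ᴴ = rd2 (ptrace₁ ρa) (C i) ⊗ₖ 1
      rw [Matrix.conjTranspose_kronecker, rd2_conj _ hρa.pt1.1.1, (hCherm i).eq,
        Matrix.conjTranspose_one]
  · rw [hTa]
    refine covMat_posSemidef _ _ ?_ hρa
    rintro (i | i | i)
    · exact Matrix.isHermitian_zero
    · change (rd2 (ptrace₁ ρc) (B i) ⊗ₖ (1 : Matrix (Fin d) (Fin d) ℂ))ᴴ = rd2 (ptrace₁ ρc) (B i) ⊗ₖ 1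
      rw [Matrix.conjTranspose_kronecker, rd2_conj _ hρc.pt1.1.1, (hBherm i).eq,
        Matrix.conjTranspose_one]
    · change ((1 : Matrix (Fin d) (Fin d) ℂ) ⊗ₖ rd1 (ptrace₂ ρb) (C i))ᴴ = 1 ⊗ₖ rd1 (ptrace₂ ρb) (C i)
      rw [Matrix.conjTranspose_kronecker, rd1_conj _ hρb.pt2.1.1, (hCherm i).eq,
        Matrix.conjTranspose_one]
  · rw [hR, hΓBTN, hTc, hTb, hTa]
    exact R_posSemidef ρa ρb ρc hρa hρb hρc A B C hAherm hBherm hCherm
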